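/- (Trajectory containment, lower boundary.) Fix K ≥ 1 and real numbers l < u and l₁ ≤ u₁ with u₁ - l₁ < u - l. Set η = 1/K, t_k = k/K, and define the lower boundary b_L(t) = (1-t)·l + t·l₁, so that b_L(t_{k+1}) = b_L(t_k) + η·(l₁ - l). Suppose there exist ε_g, δ_g > 0 such that whenever b_L(t_k) ≤ z ≤ b_L(t_k) + (1 - t_k)·ε_g we have v(z, t_k) ≥ (l₁ - l) + δ_g, and suppose the perturbations satisfy |ξ_k| ≤ ξ̄ < δ_g. If additionally the step increments η·(v + ξ_k) are small enough that the trajectory cannot jump over the boundary strip in one step, then the perturbed Euler trajectory ψ̃^{k+1} = ψ̃^k + η·(v(ψ̃^k, t_k) + ξ_k) with ψ̃^0 ≥ b_L(0) = l satisfies ψ̃^k ≥ b_L(t_k) for all k = 0, …, K. -/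

import Mathlib

/-!
Measure the trajectory by its gap `x - b` to the moving boundary. If `x` lies in the strip, one
Euler step changes the gap by `h * (w - m + ξ)`, where `w` is the velocity at `x` and `m` the slope
of the boundary. The inward margin `m + δ ≤ w` makes this at least `h * (δ - |ξ|)`, so a
perturbation of size at most `δ` cannot shrink the gap. Above the strip, the no-jump assumption
takes over.
-/

lemma lineMap_add_eq_lineMap_add_smul {R E : Type*} [Ring R] [AddCommGroup E] [Module R E]
    (a b : E) (s h : R) :
    AffineMap.lineMap a b (s + h) = AffineMap.lineMap a b s + h • (b - a) := by
  rw [AffineMap.lineMap_apply_module', AffineMap.lineMap_apply_module', add_smul, add_right_comm]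

lemma lineMap_natCast_succ_div {R E : Type*} [DivisionRing R] [AddCommGroup E] [Module R E]
    (a b : E) (k : ℕ) (c : R) :
    AffineMap.lineMap a b (((k + 1 : ℕ) : R) / c) =
      AffineMap.lineMap a b ((k : R) / c) + (1 / c) • (b - a) := by
  rw [Nat.cast_succ, add_div, lineMap_add_eq_lineMap_add_smul]

lemma lowerBarrier_le_of_step {α : Type*} [LinearOrder α] {N : ℕ} {b s x : ℕ → α}
    (hinit : b 0 ≤ x 0)
    (hstrip : ∀ k, k < N → b k ≤ x k → x k ≤ s k → b (k + 1) ≤ x (k + 1))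
    (habove : ∀ k, k < N → s k ≤ x k → b (k + 1) ≤ x (k + 1)) :
    ∀ k, k ≤ N → b k ≤ x k := by
  intro k hk
  induction k with
  | zero => exact hinit
  | succ k ih =>
    have hbx : b k ≤ x k := ih (Nat.le_of_succ_le hk)
    exact (le_total (x k) (s k)).elim (hstrip k hk hbx) (habove k hk)

section EulerStep

variable {R : Type*} [Ring R] [LinearOrder R] [IsOrderedRing R]

lemma gap_add_mul_le_gap_eulerStep {x b h m w δ ξ : R} (hh : 0 ≤ h) (hw : m + δ ≤ w) :
    (x - b) + h * (δ - |ξ|) ≤ (x + h * (w + ξ)) - (b + h * m) := by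
  have hrel : δ - |ξ| ≤ (w - m) + ξ := by
    rw [sub_eq_add_neg]
    exact add_le_add (le_sub_iff_add_le'.mpr hw) (neg_abs_le ξ)
  calc (x - b) + h * (δ - |ξ|) ≤ (x - b) + h * ((w - m) + ξ) := by gcongr
    _ = (x + h * (w + ξ)) - (b + h * m) := by noncomm_ring

lemma barrier_le_eulerStep {x b h m w δ ξ : R} (hh : 0 ≤ h) (hw : m + δ ≤ w)
    (hξ : |ξ| ≤ δ) (hbx : b ≤ x) : b + h * m ≤ x + h * (w + ξ) :=
  sub_nonneg.mp <| calc
    0 ≤ (x - b) + h * (δ - |ξ|) :=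
      add_nonneg (sub_nonneg.mpr hbx) (mul_nonneg hh (sub_nonneg.mpr hξ))
    _ ≤ (x + h * (w + ξ)) - (b + h * m) := gap_add_mul_le_gap_eulerStep hh hw

/-- The time grid enters only through the step sizes `h k`, and `f k` is the velocity field at the
`k`-th grid point. -/
theorem stmt_4_general {N : ℕ} {f : ℕ → R → R} {b s x h m δ ξ : ℕ → R}
    (hh : ∀ k, k < N → 0 ≤ h k)
    (hb : ∀ k, k < N → b (k + 1) ≤ b k + h k * m k)
    (hf : ∀ k, k < N → ∀ z, b k ≤ z → z ≤ s k → m k + δ k ≤ f k z)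
    (hξ : ∀ k, k < N → |ξ k| ≤ δ k)
    (hjump : ∀ k, k < N → s k ≤ x k → b (k + 1) ≤ x (k + 1))
    (hrec : ∀ k, k < N → x (k + 1) = x k + h k * (f k (x k) + ξ k))
    (hinit : b 0 ≤ x 0) :
    ∀ k, k ≤ N → b k ≤ x k := by
  refine lowerBarrier_le_of_step hinit (fun k hk hbx hxs ↦ ?_) hjump
  calc b (k + 1) ≤ b k + h k * m k := hb k hk
    _ ≤ x k + h k * (f k (x k) + ξ k) :=
      barrier_le_eulerStep (hh k hk) (hf k hk _ hbx hxs) (hξ k hk) hbx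
    _ = x (k + 1) := (hrec k hk).symm

end EulerStep

/-- Trajectory containment at the lower boundary of the conic region: a perturbed Euler
trajectory of an inward-pointing velocity field stays above the moving lower boundary. -/
theorem stmt_4 (K : ℕ) (hK : 1 ≤ K) (l u l₁ u₁ : ℝ) (hlu : l < u) (hl₁u₁ : l₁ ≤ u₁)
    (hnarrow : u₁ - l₁ < u - l)
    (v : ℝ → ℝ → ℝ) (ξ : ℕ → ℝ) (ψt : ℕ → ℝ)
    (η : ℝ) (hη : η = 1 / (K : ℝ)) (t : ℕ → ℝ) (ht : ∀ k, t k = (k : ℝ) / (K : ℝ))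
    (bL : ℝ → ℝ) (hbL : ∀ s, bL s = (1 - s) * l + s * l₁)
    (ε δg ξbar : ℝ) (hε : 0 < ε) (hδg : 0 < δg)
    (hboundary : ∀ k, k < K → ∀ z, bL (t k) ≤ z → z ≤ bL (t k) + (1 - t k) * ε →
      (l₁ - l) + δg ≤ v z (t k))
    (hξ : ∀ k, k < K → |ξ k| ≤ ξbar) (hξbar : ξbar < δg)
    (hstep : ∀ k, k < K → bL (t k) + (1 - t k) * ε ≤ ψt k → bL (t (k + 1)) ≤ ψt (k + 1))
    (hrec : ∀ k, k < K → ψt (k + 1) = ψt k + η * (v (ψt k) (t k) + ξ k))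
    (hinit : bL 0 ≤ ψt 0) :
    ∀ k, k ≤ K → bL (t k) ≤ ψt k := by
  have hη_nonneg : 0 ≤ η := by rw [hη]; positivity
  have hbL_succ (k : ℕ) : bL (t (k + 1)) = bL (t k) + η * (l₁ - l) := by
    simp only [hbL, ht, hη, ← AffineMap.lineMap_apply_ring, lineMap_natCast_succ_div, smul_eq_mul]
  have hinit_grid : bL (t 0) ≤ ψt 0 := by rwa [ht, Nat.cast_zero, zero_div]
  exact stmt_4_general (b := fun k ↦ bL (t k)) (f := fun k z ↦ v z (t k)) (fun _ _ ↦ hη_nonneg)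
    (fun k _ ↦ (hbL_succ k).le) hboundary (fun k hk ↦ (hξ k hk).trans hξbar.le) hstep hrec
    hinit_grid
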